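/- arXiv:0805.0670 — 2 statements merged into one kernel-verified Lean document; each statement's English description precedes it below -/
import Mathlib

section
/- Let 0 ≤ m ≤ n. The subspaces R_{m−k}(S^{n−k,k}) of M^{n−m,m}, for k = 0, 1, …, min{n−m, m}, are S_n-invariant and pairwise orthogonal, and M^{n−m,m} is their internal direct sum: M^{n−m,m} = ⊕_{k=0}^{min{n−m,m}} R_{m−k}(S^{n−k,k}). -/
/-!
The operators `d` and `d*` are mutually adjoint and satisfy the `sl₂`-type relation
`d d* - d* d = n - 2m` on `M^{n-m,m}` (`dR_dS`). Hence for `g ∈ S^{n-k,k}` the string `R_q g` obeys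
`d R_{q+1} g = (n - 2k - q) R_q g` (`dR_RT_succ`), and `R_{m-k}(S^{n-k,k})` is contained in the
eigenspace of the self-adjoint operator `d* d` for the eigenvalue `(m - k)(n - m - k + 1)`. These
eigenvalues are distinct for `k ≤ min (n - m) m`, so the summands are orthogonal
(`summand_orthogonal`), and therefore independent.

Spanning (`Mdeg_le_iSup`) is an induction on `m`. By adjointness `M^{n-m-1,m+1}` is the sum of
`ker d` and `d* M^{n-m,m}`. The kernel of `d` is the new summand `k = m + 1`, or zero when
`n < 2(m + 1)`, since there `‖d* f‖² = ‖d f‖² + (n - 2(m + 1)) ‖f‖²`. On the other part `d*` carries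
the `k`-th summand into the `k`-th summand, and kills it when `k = n - m`.
-/

open Finset

noncomputable section

/-- The Radon transform `d : M^{n-m,m} → M^{n-m+1,m-1}`, `(df)(B) = ∑_{x ∉ B} f(B ∪ {x})`. -/
def dR (n : ℕ) (f : Finset (Fin n) → ℂ) : Finset (Fin n) → ℂ :=
  fun B => ∑ x ∈ Bᶜ, f (insert x B)

/-- The adjoint Radon transform `d* : M^{n-m,m} → M^{n-m-1,m+1}`. -/
def dS (n : ℕ) (f : Finset (Fin n) → ℂ) : Finset (Fin n) → ℂ :=
  fun B => ∑ x ∈ B, f (B.erase x)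

/-- `R_q = (d*)^q / q!`, i.e. `(R_q f)(B) = ∑_{A ⊆ B, |A| = |B| - q} f(A)`. -/
def RT (n q : ℕ) (f : Finset (Fin n) → ℂ) : Finset (Fin n) → ℂ :=
  fun B => if q ≤ B.card then ∑ A ∈ B.powersetCard (B.card - q), f A else 0

/-- Pochhammer symbol `(t)_p = t(t+1)⋯(t+p-1)`. -/
def poch (t : ℤ) (p : ℕ) : ℤ := ∏ i ∈ Finset.range p, (t + i)

/-- Dunkl-normalized Hahn polynomial value `E_m(a,b,c,x)`. -/
def hahnE (m : ℕ) (a b c x : ℤ) : ℤ :=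
  ∑ j ∈ Finset.Icc (max 0 (x - c + m)) (min (m : ℤ) x),
    (-1) ^ j.toNat * (m.choose j.toNat : ℤ) * poch (b - m + 1) j.toNat * poch (-x) j.toNat *
      poch (a - m + 1) (m - j.toNat) * poch (x - c) (m - j.toNat)

/-- Inner product `⟨f, g⟩ = ∑ f(s) conj (g s)`. -/
def ip (n : ℕ) (f g : Finset (Fin n) → ℂ) : ℂ :=
  ∑ s : Finset (Fin n), f s * (starRingEnd ℂ) (g s)

/-- Action of `S_n`: `(g · f)(ω) = f (g⁻¹ ω)`. -/
def permAct (n : ℕ) (g : Equiv.Perm (Fin n)) (f : Finset (Fin n) → ℂ) :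
    Finset (Fin n) → ℂ :=
  fun s => f (s.image ⇑g⁻¹)

/-- The block `{o+1, …, o+a}` of the ground set `{1, …, n}` (0-indexed: positions `o ≤ x < o+a`). -/
def block (n o a : ℕ) : Finset (Fin n) :=
  Finset.filter (fun x => o ≤ (x : ℕ) ∧ (x : ℕ) < o + a) Finset.univ

/-- Tensor product relative to the partition `A = {1,…,h}`, `B = {h+1,…,n}`:
`(φ ⊗ ψ)(Z) = φ(Z ∩ A) · ψ(Z ∩ B)`. -/
def tens (n h : ℕ) (φ ψ : Finset (Fin n) → ℂ) : Finset (Fin n) → ℂ :=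
  fun Z => φ (Z ∩ block n 0 h) * ψ (Z ∩ block n h (n - h))

/-- `M^{n-m,m}` as the submodule of functions supported on `m`-subsets. -/
def Mdeg (n m : ℕ) : Submodule ℂ (Finset (Fin n) → ℂ) where
  carrier := {f | ∀ s : Finset (Fin n), s.card ≠ m → f s = 0}
  add_mem' := by
    intro f g hf hg s hs
    simp [hf s hs, hg s hs]
  zero_mem' := by intro s _; rfl
  smul_mem' := by
    intro c f hf s hs
    simp [hf s hs]

/-- The Radon transform `d` as a linear map. -/
def dL (n : ℕ) : (Finset (Fin n) → ℂ) →ₗ[ℂ] Finset (Fin n) → ℂ where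
  toFun := dR n
  map_add' f g := by
    funext B
    simp [dR, Finset.sum_add_distrib]
  map_smul' c f := by
    funext B
    simp [dR, Finset.mul_sum]

/-- `R_q` as a linear map. -/
def RTL (n q : ℕ) : (Finset (Fin n) → ℂ) →ₗ[ℂ] Finset (Fin n) → ℂ where
  toFun := RT n q
  map_add' f g := by
    funext B
    by_cases h : q ≤ B.card <;> simp [RT, h, Finset.sum_add_distrib]
  map_smul' c f := by
    funext B
    by_cases h : q ≤ B.card <;> simp [RT, h, Finset.mul_sum]

/-! ### The operators `d` and `d*` -/

/-- The adjoint Radon transform `d*` as a linear map. -/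
def dSL (n : ℕ) : (Finset (Fin n) → ℂ) →ₗ[ℂ] Finset (Fin n) → ℂ where
  toFun := dS n
  map_add' f g := by
    funext B
    simp [dS, Finset.sum_add_distrib]
  map_smul' c f := by
    funext B
    simp [dS, Finset.mul_sum]

/-- The summand `R_{m-k}(S^{n-k,k})` of `M^{n-m,m}`. -/
abbrev radonSummand (n m k : ℕ) : Submodule ℂ (Finset (Fin n) → ℂ) :=
  (Mdeg n k ⊓ LinearMap.ker (dL n)).map (RTL n (m - k))

lemma mem_Mdeg {n m : ℕ} {f : Finset (Fin n) → ℂ} :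
    f ∈ Mdeg n m ↔ ∀ s : Finset (Fin n), s.card ≠ m → f s = 0 := Iff.rfl

lemma dS_mem {n m : ℕ} {f : Finset (Fin n) → ℂ} (hf : f ∈ Mdeg n m) :
    dS n f ∈ Mdeg n (m + 1) := by
  intro s hs
  refine Finset.sum_eq_zero fun x hx => hf _ ?_
  have := Finset.card_erase_add_one hx
  omega

lemma dR_mem {n m : ℕ} {f : Finset (Fin n) → ℂ} (hf : f ∈ Mdeg n (m + 1)) :
    dR n f ∈ Mdeg n m := by
  intro s hs
  refine Finset.sum_eq_zero fun x hx => hf _ ?_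
  rw [Finset.card_insert_of_notMem (Finset.mem_compl.mp hx)]
  omega

lemma RT_mem {n m q : ℕ} {f : Finset (Fin n) → ℂ} (hf : f ∈ Mdeg n m) :
    RT n q f ∈ Mdeg n (m + q) := by
  intro s hs
  unfold RT
  split_ifs with h
  · refine Finset.sum_eq_zero fun A hA => hf _ ?_
    have := (Finset.mem_powersetCard.mp hA).2
    omega
  · rfl

lemma RT_zero (n : ℕ) (f : Finset (Fin n) → ℂ) : RT n 0 f = f := by
  funext B
  simp [RT]

/-- The recursion behind `R_q = (d*)^q / q!`: a set `A ⊆ B` with `|A| = |B| - q - 1` is contained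
in `B ∖ {x}` for exactly `q + 1` elements `x ∈ B`. -/
lemma dS_RT (n q : ℕ) (f : Finset (Fin n) → ℂ) :
    dS n (RT n q f) = ((q : ℂ) + 1) • RT n (q + 1) f := by
  funext B
  simp only [dS, Pi.smul_apply, smul_eq_mul, RT]
  by_cases h : q + 1 ≤ B.card
  · rw [if_pos h, Finset.mul_sum]
    have h1 : ∀ x ∈ B, (if q ≤ (B.erase x).card then
        ∑ A ∈ (B.erase x).powersetCard ((B.erase x).card - q), f A else 0) =
        ∑ A ∈ (B.erase x).powersetCard (B.card - (q + 1)), f A := by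
      intro x hx
      have hc := Finset.card_erase_add_one hx
      rw [if_pos (by omega)]
      congr 2
      omega
    rw [Finset.sum_congr rfl h1]
    rw [Finset.sum_comm' (t' := B.powersetCard (B.card - (q + 1))) (s' := fun A => B \ A)]
    · refine Finset.sum_congr rfl fun A hA => ?_
      obtain ⟨hs, hc⟩ := Finset.mem_powersetCard.mp hA
      rw [Finset.sum_const, Finset.card_sdiff_of_subset hs, hc, nsmul_eq_mul]
      have : B.card - (B.card - (q + 1)) = q + 1 := by omega
      rw [this]
      push_cast
      ring
    · intro x A
      simp only [Finset.mem_powersetCard, Finset.mem_sdiff, Finset.subset_erase]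
      tauto
  · rw [if_neg h, mul_zero]
    refine Finset.sum_eq_zero fun x hx => ?_
    have hc := Finset.card_erase_add_one hx
    rw [if_neg (by omega)]

/-- The `sl₂`-type relation `d d* - d* d = n - 2m` on `M^{n-m,m}`. -/
lemma dR_dS {n m : ℕ} {f : Finset (Fin n) → ℂ} (hf : f ∈ Mdeg n m) :
    dR n (dS n f) = dS n (dR n f) + ((n : ℂ) - 2 * m) • f := by
  funext B
  have e1 : dR n (dS n f) B = ((Bᶜ.card : ℕ) : ℂ) * f B +
      ∑ x ∈ Bᶜ, ∑ y ∈ B, f (insert x (B.erase y)) := by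
    simp only [dR, dS]
    rw [← nsmul_eq_mul, ← Finset.sum_const, ← Finset.sum_add_distrib]
    refine Finset.sum_congr rfl fun x hx => ?_
    have hx' := Finset.mem_compl.mp hx
    rw [Finset.sum_insert hx', Finset.erase_insert hx']
    congr 1
    refine Finset.sum_congr rfl fun y hy => ?_
    rw [Finset.erase_insert_of_ne]
    rintro rfl
    exact hx' hy
  have e2 : dS n (dR n f) B = (B.card : ℂ) * f B +
      ∑ y ∈ B, ∑ x ∈ Bᶜ, f (insert x (B.erase y)) := by
    simp only [dR, dS]
    rw [← nsmul_eq_mul, ← Finset.sum_const, ← Finset.sum_add_distrib]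
    refine Finset.sum_congr rfl fun y hy => ?_
    rw [Finset.compl_erase, Finset.sum_insert (by simpa using hy), Finset.insert_erase hy]
  rw [Pi.add_apply, e1, e2, Finset.sum_comm, Pi.smul_apply, smul_eq_mul]
  by_cases hB : B.card = m
  · have hc : ((Bᶜ.card : ℕ) : ℂ) = (n : ℂ) - m := by
      have := Finset.card_add_card_compl B
      rw [Fintype.card_fin, hB] at this
      rw [eq_sub_iff_add_eq, add_comm]
      exact_mod_cast this
    rw [hc, hB]
    ring
  · rw [hf B hB]
    ring

/-- The action of `d` on the string `g, R_1 g, R_2 g, …` generated by `g ∈ S^{n-k,k}`. -/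
lemma dR_RT_succ {n k : ℕ} {g : Finset (Fin n) → ℂ} (hg : g ∈ Mdeg n k) (hd : dR n g = 0)
    (q : ℕ) : dR n (RT n (q + 1) g) = ((n : ℂ) - 2 * k - q) • RT n q g := by
  have key : ∀ q : ℕ, dS n (dR n (RT n q g)) = ((q : ℂ) * (n - 2 * k - q + 1)) • RT n q g →
      dR n (RT n (q + 1) g) = ((n : ℂ) - 2 * k - q) • RT n q g := by
    intro q hq
    have h := dR_dS (RT_mem (q := q) hg)
    rw [dS_RT, hq, ← add_smul] at h
    have h2 : dR n (((q : ℂ) + 1) • RT n (q + 1) g) = ((q : ℂ) + 1) • dR n (RT n (q + 1) g) :=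
      (dL n).map_smul _ _
    rw [h2] at h
    have hne : (q : ℂ) + 1 ≠ 0 := by exact_mod_cast Nat.succ_ne_zero q
    apply smul_right_injective _ hne
    simp only
    rw [h, smul_smul]
    congr 1
    push_cast
    ring
  induction q with
  | zero =>
    apply key
    rw [RT_zero, hd]
    rw [Nat.cast_zero, zero_mul, zero_smul]
    exact (dSL n).map_zero
  | succ q ih =>
    apply key
    have h3 : dS n (((n : ℂ) - 2 * k - q) • RT n q g) =
        ((n : ℂ) - 2 * k - q) • dS n (RT n q g) := (dSL n).map_smul _ _
    rw [ih, h3, dS_RT, smul_smul]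
    congr 1
    push_cast
    ring

/-- `R_q(S^{n-k,k})` consists of eigenvectors of `d* d`. -/
lemma dS_dR_RT {n k : ℕ} {g : Finset (Fin n) → ℂ} (hg : g ∈ Mdeg n k) (hd : dR n g = 0)
    (q : ℕ) : dS n (dR n (RT n q g)) = ((q : ℂ) * (n - 2 * k - q + 1)) • RT n q g := by
  cases q with
  | zero =>
    rw [RT_zero, hd]
    rw [Nat.cast_zero, zero_mul, zero_smul]
    exact (dSL n).map_zero
  | succ q =>
    have h3 : dS n (((n : ℂ) - 2 * k - q) • RT n q g) =
        ((n : ℂ) - 2 * k - q) • dS n (RT n q g) := (dSL n).map_smul _ _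
    rw [dR_RT_succ hg hd, h3, dS_RT, smul_smul]
    congr 1
    push_cast
    ring

/-! ### The inner product -/

lemma ip_conj (n : ℕ) (f g : Finset (Fin n) → ℂ) : (starRingEnd ℂ) (ip n f g) = ip n g f := by
  simp [ip, mul_comm]

lemma ip_dS (n : ℕ) (f g : Finset (Fin n) → ℂ) : ip n (dS n f) g = ip n f (dR n g) := by
  simp only [ip, dS, dR, map_sum, Finset.sum_mul, Finset.mul_sum]
  rw [Finset.sum_sigma', Finset.sum_sigma']
  refine Finset.sum_nbij' (fun p => ⟨p.1.erase p.2, p.2⟩) (fun p => ⟨insert p.2 p.1, p.2⟩)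
    ?_ ?_ ?_ ?_ ?_
  · rintro ⟨B, x⟩ h
    simp
  · rintro ⟨B, x⟩ h
    simp
  · rintro ⟨B, x⟩ h
    have : x ∈ B := by simpa using h
    simp [Finset.insert_erase this]
  · rintro ⟨B, x⟩ h
    have : x ∉ B := by simpa using h
    simp [Finset.erase_insert this]
  · rintro ⟨B, x⟩ h
    have : x ∈ B := by simpa using h
    simp [Finset.insert_erase this]

lemma ip_dR (n : ℕ) (f g : Finset (Fin n) → ℂ) : ip n (dR n f) g = ip n f (dS n g) := by
  rw [← ip_conj, ← ip_dS, ip_conj]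

lemma ip_add_left (n : ℕ) (f g h : Finset (Fin n) → ℂ) :
    ip n (f + g) h = ip n f h + ip n g h := by
  simp [ip, add_mul, Finset.sum_add_distrib]

lemma ip_smul_left (n : ℕ) (c : ℂ) (f g : Finset (Fin n) → ℂ) :
    ip n (c • f) g = c * ip n f g := by
  simp [ip, Finset.mul_sum, mul_assoc]

lemma ip_smul_right (n : ℕ) (c : ℂ) (f g : Finset (Fin n) → ℂ) :
    ip n f (c • g) = (starRingEnd ℂ) c * ip n f g := by
  simp [ip, Finset.mul_sum, mul_left_comm]

lemma ip_sum_right {ι : Type*} (n : ℕ) (s : Finset ι) (f : Finset (Fin n) → ℂ)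
    (c : ι → Finset (Fin n) → ℂ) : ip n f (∑ k ∈ s, c k) = ∑ k ∈ s, ip n f (c k) := by
  simp only [ip, Finset.sum_apply, map_sum, Finset.mul_sum]
  exact Finset.sum_comm

lemma ip_self (n : ℕ) (f : Finset (Fin n) → ℂ) :
    ip n f f = ((∑ s, Complex.normSq (f s) : ℝ) : ℂ) := by
  simp [ip, Complex.mul_conj]

lemma ip_self_eq_zero {n : ℕ} {f : Finset (Fin n) → ℂ} (h : ip n f f = 0) : f = 0 := by
  rw [ip_self, Complex.ofReal_eq_zero,
    Finset.sum_eq_zero_iff_of_nonneg fun _ _ => Complex.normSq_nonneg _] at h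
  funext s
  simpa using h s (Finset.mem_univ s)

/-- Orthogonal projection onto a subspace, phrased with `ip`. -/
lemma exists_ip_proj (n : ℕ) (U : Submodule ℂ (Finset (Fin n) → ℂ)) (f : Finset (Fin n) → ℂ) :
    ∃ u ∈ U, ∀ w ∈ U, ip n w (f - u) = 0 := by
  let e : EuclideanSpace ℂ (Finset (Fin n)) ≃ₗ[ℂ] (Finset (Fin n) → ℂ) := WithLp.linearEquiv 2 ℂ _
  let K := U.comap e.toLinearMap
  have hp := K.starProjection_apply_mem (e.symm f)
  refine ⟨e (K.starProjection (e.symm f)), hp, fun w hw => ?_⟩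
  have ho := K.starProjection_inner_eq_zero (e.symm f) (e.symm w) (by simpa [K] using hw)
  rw [← ip_conj, map_eq_zero]
  rw [← inner_conj_symm, map_eq_zero] at ho
  simpa [ip, PiLp.inner_apply, e] using ho

/-- `d` is injective on `M^{n-m,m}` when `n < 2m`: if `d f = 0`, the commutation relation gives
`‖d* f‖² = (n - 2m) ‖f‖²`. -/
lemma eq_zero_of_dR_eq_zero {n m : ℕ} (hnm : n < 2 * m) {f : Finset (Fin n) → ℂ}
    (hf : f ∈ Mdeg n m) (hd : dR n f = 0) : f = 0 := by
  have h : ip n (dS n f) (dS n f) = ((n : ℂ) - 2 * m) * ip n f f := by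
    have h0 : dS n 0 = 0 := (dSL n).map_zero
    rw [← ip_dR, dR_dS hf, hd, h0, zero_add, ip_smul_left]
  apply ip_self_eq_zero
  rw [ip_self, ip_self] at h
  rw [ip_self]
  have h1 : (0 : ℝ) ≤ ∑ s, Complex.normSq (dS n f s) :=
    Finset.sum_nonneg fun _ _ => Complex.normSq_nonneg _
  have h2 : (0 : ℝ) ≤ ∑ s, Complex.normSq (f s) :=
    Finset.sum_nonneg fun _ _ => Complex.normSq_nonneg _
  have h3 : (∑ s, Complex.normSq (dS n f s)) = ((n : ℝ) - 2 * m) * ∑ s, Complex.normSq (f s) := by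
    exact_mod_cast h
  have h4 : (n : ℝ) + 1 ≤ 2 * m := by exact_mod_cast hnm
  rw [Complex.ofReal_eq_zero]
  nlinarith

/-- Distinct summands belong to distinct eigenvalues of the self-adjoint operator `d* d`. -/
lemma summand_orthogonal {n m k₁ k₂ : ℕ} (hm : m ≤ n) (h₁ : k₁ ≤ min (n - m) m)
    (h₂ : k₂ ≤ min (n - m) m) (hne : k₁ ≠ k₂) {f₁ f₂ : Finset (Fin n) → ℂ}
    (hf₁ : f₁ ∈ radonSummand n m k₁) (hf₂ : f₂ ∈ radonSummand n m k₂) : ip n f₁ f₂ = 0 := by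
  obtain ⟨g₁, ⟨hg₁, hd₁⟩, rfl⟩ := hf₁
  obtain ⟨g₂, ⟨hg₂, hd₂⟩, rfl⟩ := hf₂
  have e₁ := dS_dR_RT hg₁ hd₁ (m - k₁)
  have e₂ := dS_dR_RT hg₂ hd₂ (m - k₂)
  change ip n (RT n (m - k₁) g₁) (RT n (m - k₂) g₂) = 0
  have h : ip n (dS n (dR n (RT n (m - k₁) g₁))) (RT n (m - k₂) g₂) =
      ip n (RT n (m - k₁) g₁) (dS n (dR n (RT n (m - k₂) g₂))) := by
    rw [ip_dS, ip_dR]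
  rw [e₁, e₂, ip_smul_left, ip_smul_right, ← sub_eq_zero, ← sub_mul] at h
  refine (mul_eq_zero.mp h).resolve_left ?_
  have a₁ : k₁ ≤ m := h₁.trans (min_le_right _ _)
  have a₂ : k₂ ≤ m := h₂.trans (min_le_right _ _)
  have b₁ : k₁ + m ≤ n := by omega
  have b₂ : k₂ + m ≤ n := by omega
  rw [Nat.cast_sub a₁, Nat.cast_sub a₂]
  simp only [map_mul, map_sub, map_add, map_natCast, map_one, Complex.conj_ofNat]
  -- the difference of the two eigenvalues factors
  have hfac : ((m : ℂ) - k₁) * (n - 2 * k₁ - (m - k₁) + 1) -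
      ((m : ℂ) - k₂) * (n - 2 * k₂ - (m - k₂) + 1) =
      (((k₂ : ℤ) - k₁) * ((n : ℤ) + 1 - k₁ - k₂) : ℤ) := by
    push_cast
    ring
  rw [hfac, Int.cast_eq_zero]
  exact mul_ne_zero (by omega) (by omega)

/-! ### Invariance under permutations -/

lemma permAct_mem {n m : ℕ} (g : Equiv.Perm (Fin n)) {f : Finset (Fin n) → ℂ}
    (hf : f ∈ Mdeg n m) : permAct n g f ∈ Mdeg n m := by
  intro s hs
  refine hf _ ?_
  rwa [Finset.card_image_of_injective _ (Equiv.injective _)]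

lemma dR_permAct (n : ℕ) (g : Equiv.Perm (Fin n)) (f : Finset (Fin n) → ℂ) :
    dR n (permAct n g f) = permAct n g (dR n f) := by
  funext B
  simp only [dR, permAct]
  refine Finset.sum_equiv g⁻¹ (fun x => ?_) (fun x _ => ?_)
  · rw [Finset.mem_compl, Finset.mem_compl,
      (Equiv.injective (g⁻¹ : Equiv.Perm (Fin n))).mem_finset_image]
  · rw [Finset.image_insert]

lemma RT_permAct (n q : ℕ) (g : Equiv.Perm (Fin n)) (f : Finset (Fin n) → ℂ) :
    RT n q (permAct n g f) = permAct n g (RT n q f) := by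
  funext B
  simp only [RT, permAct]
  rw [Finset.card_image_of_injective _ (Equiv.injective _)]
  congr 1
  refine Finset.sum_nbij' (fun A => A.image ⇑g⁻¹) (fun A => A.image ⇑g) ?_ ?_ ?_ ?_ ?_
  · intro A hA
    obtain ⟨h1, h2⟩ := Finset.mem_powersetCard.mp hA
    exact Finset.mem_powersetCard.mpr ⟨Finset.image_subset_image h1, by
      rwa [Finset.card_image_of_injective _ (Equiv.injective _)]⟩
  · intro A hA
    obtain ⟨h1, h2⟩ := Finset.mem_powersetCard.mp hA
    refine Finset.mem_powersetCard.mpr ⟨?_, by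
      rwa [Finset.card_image_of_injective _ (Equiv.injective _)]⟩
    refine (Finset.image_subset_image (f := ⇑g) h1).trans ?_
    rw [Finset.image_image]
    simp [Function.comp_def]
  · intro A _
    simp [Finset.image_image, Function.comp_def]
  · intro A _
    simp [Finset.image_image, Function.comp_def]
  · intro A _
    rfl

/-! ### Spanning -/

/-- `d*` maps the `k`-th summand of `M^{n-m,m}` into the `k`-th summand of `M^{n-m-1,m+1}`, and
annihilates the one summand, `k = n - m`, that has no counterpart there. -/
lemma dS_summand {n m k : ℕ} (hm : m + 1 ≤ n) (hk : k ≤ min (n - m) m)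
    {f : Finset (Fin n) → ℂ} (hf : f ∈ radonSummand n m k) :
    dS n f ∈ ⨆ j : Fin (min (n - (m + 1)) (m + 1) + 1), radonSummand n (m + 1) j := by
  obtain ⟨g, ⟨hg, hd⟩, rfl⟩ := hf
  have hkm : k ≤ m := hk.trans (min_le_right _ _)
  have hkn : k + m ≤ n := by omega
  have hq : m - k + 1 = m + 1 - k := by omega
  change dS n (RT n (m - k) g) ∈ _
  rw [dS_RT, hq]
  refine Submodule.smul_mem _ _ ?_
  by_cases hk' : k ≤ min (n - (m + 1)) (m + 1)
  · exact Submodule.mem_iSup_of_mem ⟨k, by omega⟩ ⟨g, ⟨hg, hd⟩, rfl⟩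
  · have hkn' : n = k + m := by omega
    have hz : RT n (m + 1 - k) g = 0 := by
      refine eq_zero_of_dR_eq_zero (m := m + 1) (by omega) ?_ ?_
      · have := RT_mem (q := m + 1 - k) hg
        rwa [show k + (m + 1 - k) = m + 1 by omega] at this
      · rw [← hq, dR_RT_succ hg hd, Nat.cast_sub hkm]
        have : (n : ℂ) - 2 * k - (m - k) = 0 := by
          rw [hkn']
          push_cast
          ring
        rw [this, zero_smul]
    rw [hz]
    exact Submodule.zero_mem _

lemma Mdeg_le_iSup (n m : ℕ) (hm : m ≤ n) :
    Mdeg n m ≤ ⨆ j : Fin (min (n - m) m + 1), radonSummand n m j := by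
  -- an element of `M^{n-m,m}` killed by `d` lies in the summand `k = m`, or vanishes if `n < 2m`
  have hker : ∀ m ≤ n, ∀ f ∈ Mdeg n m, dR n f = 0 →
      f ∈ ⨆ j : Fin (min (n - m) m + 1), radonSummand n m j := by
    intro m hm f hf hd
    by_cases h : n < 2 * m
    · rw [eq_zero_of_dR_eq_zero h hf hd]
      exact Submodule.zero_mem _
    · refine Submodule.mem_iSup_of_mem ⟨m, by omega⟩ ⟨f, ⟨hf, hd⟩, ?_⟩
      change RT n (m - m) f = f
      rw [Nat.sub_self, RT_zero]
  induction m with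
  | zero =>
    intro f hf
    refine hker 0 hm f hf ?_
    funext B
    refine Finset.sum_eq_zero fun x hx => hf _ ?_
    rw [Finset.card_insert_of_notMem (Finset.mem_compl.mp hx)]
    omega
  | succ m ih =>
    intro f hf
    obtain ⟨u, hu, ho⟩ := exists_ip_proj n ((Mdeg n m).map (dSL n)) f
    obtain ⟨h, hh, rfl⟩ := hu
    have hmem : f - dSL n h ∈ Mdeg n (m + 1) := Submodule.sub_mem _ hf (dS_mem hh)
    -- the component orthogonal to the image of `d*` is killed by the adjoint `d`
    have hd : dR n (f - dSL n h) = 0 := by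
      apply ip_self_eq_zero
      rw [← ip_dS]
      exact ho _ ⟨_, dR_mem hmem, rfl⟩
    have hle : (⨆ j : Fin (min (n - m) m + 1), radonSummand n m j) ≤
        (⨆ j : Fin (min (n - (m + 1)) (m + 1) + 1), radonSummand n (m + 1) j).comap (dSL n) :=
      iSup_le fun j f hf => dS_summand hm (Nat.lt_succ_iff.mp j.2) hf
    have := Submodule.add_mem _ (hker (m + 1) hm _ hmem hd) (hle (ih (by omega) hh))
    rwa [sub_add_cancel] at this

/-- Theorem 2.2(3): the subspaces `R_{m-k}(S^{n-k,k})`, `k = 0,…,min{n-m,m}`, are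
`S_n`-invariant subspaces of `M^{n-m,m}`, pairwise orthogonal, and `M^{n-m,m}` is their
internal direct sum. -/
theorem stmt5 (n m : ℕ) (hn : 1 ≤ n) (hm : m ≤ n) :
    (∀ k ≤ min (n - m) m,
      (Mdeg n k ⊓ LinearMap.ker (dL n)).map (RTL n (m - k)) ≤ Mdeg n m) ∧
    (∀ k ≤ min (n - m) m, ∀ (g : Equiv.Perm (Fin n)) (f : Finset (Fin n) → ℂ),
      f ∈ (Mdeg n k ⊓ LinearMap.ker (dL n)).map (RTL n (m - k)) →
      permAct n g f ∈ (Mdeg n k ⊓ LinearMap.ker (dL n)).map (RTL n (m - k))) ∧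
    (∀ k₁ k₂ : ℕ, k₁ ≤ min (n - m) m → k₂ ≤ min (n - m) m → k₁ ≠ k₂ →
      ∀ f₁ ∈ (Mdeg n k₁ ⊓ LinearMap.ker (dL n)).map (RTL n (m - k₁)),
      ∀ f₂ ∈ (Mdeg n k₂ ⊓ LinearMap.ker (dL n)).map (RTL n (m - k₂)),
      ip n f₁ f₂ = 0) ∧
    (∀ c : Fin (min (n - m) m + 1) → Finset (Fin n) → ℂ,
      (∀ k : Fin (min (n - m) m + 1),
        c k ∈ (Mdeg n (k : ℕ) ⊓ LinearMap.ker (dL n)).map (RTL n (m - (k : ℕ)))) →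
      ∑ k, c k = 0 → ∀ k, c k = 0) ∧
    (∀ f ∈ Mdeg n m, ∃ c : Fin (min (n - m) m + 1) → Finset (Fin n) → ℂ,
      (∀ k : Fin (min (n - m) m + 1),
        c k ∈ (Mdeg n (k : ℕ) ⊓ LinearMap.ker (dL n)).map (RTL n (m - (k : ℕ)))) ∧
      f = ∑ k, c k) := by
  refine ⟨?_, ?_, ?_, ?_, ?_⟩
  · rintro k hk _ ⟨g, ⟨hg, -⟩, rfl⟩
    have := RT_mem (q := m - k) hg
    rwa [Nat.add_sub_cancel' (hk.trans (min_le_right _ _))] at this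
  · rintro k hk g _ ⟨f, ⟨hf, hd⟩, rfl⟩
    refine ⟨permAct n g f, ⟨permAct_mem g hf, ?_⟩, RT_permAct n _ g f⟩
    have hd' : dR n f = 0 := hd
    change dR n (permAct n g f) = 0
    rw [dR_permAct, hd']
    rfl
  · intro k₁ k₂ h₁ h₂ hne f₁ hf₁ f₂ hf₂
    exact summand_orthogonal hm h₁ h₂ hne hf₁ hf₂
  · intro c hc hsum k
    apply ip_self_eq_zero
    have h : ip n (c k) (∑ j, c j) = 0 := by
      rw [hsum]
      simp [ip]
    rw [ip_sum_right, Finset.sum_eq_single k] at h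
    · exact h
    · intro j _ hj
      exact summand_orthogonal hm (Nat.lt_succ_iff.mp k.2) (Nat.lt_succ_iff.mp j.2)
        (fun e => hj (Fin.ext e.symm)) (hc k) (hc j)
    · simp
  · intro f hf
    obtain ⟨c, hc⟩ := (Submodule.mem_iSup_iff_exists_finsupp _ _).mp (Mdeg_le_iSup n m hm hf)
    refine ⟨c, hc.1, ?_⟩
    rw [← hc.2, Finsupp.sum_fintype]
    simp
end
end

section
/- Let 0 ≤ h ≤ n, 0 ≤ i ≤ h/2, 0 ≤ j ≤ (n−h)/2, φ ∈ S^{h−i,i}(A), ψ ∈ S^{n−h−j,j}(B). For all integers 0 ≤ k ≤ m ≤ n and max{i−h+k, j} ≤ l ≤ min{k−i, n−h−j}: R_{m−k}[ (R_{k−l−i}φ)⊗(R_{l−j}ψ) ] = Σ_{w=max{l, i−h+m}}^{min{m−k+l, n−h−j}} C(m−w−i, k−l−i)·C(w−j, l−j)·(R_{m−w−i}φ)⊗(R_{w−j}ψ). -/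
/-!
Write `F(C) = ∑_{D ⊆ C} φ(D)` and `G(C) = ∑_{D ⊆ C} ψ(D)`. Since `φ` lives on `i`-subsets,
`R_q φ (C)` is `F(C)` if `|C| = q + i` and `0` otherwise (`RT_eq`), and likewise for `ψ`. With
`a = Z ∩ A` and `b = Z ∩ B`, the left-hand side factors over subsets of `a` and of `b`
(`sum_powerset_split`); double counting (`sum_powersetCard_sum_powerset`) turns it into
`C(|a| - i, k - l - i) F(a) · C(|b| - j, l - j) G(b)`. On the right-hand side only `w = |b|`
contributes, with the same value.

It remains to see that the left-hand side vanishes when `|b|` lies outside the range of summation.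
For `|b| < l` or `|b| > m - k + l` a binomial coefficient vanishes (or `G(b)` or `F(a)` does,
because `|b| < j` or `|a| < i`). In the other two cases,
`|a| > h - i` or `|b| > n - h - j`, it is the condition `dφ = 0` or `dψ = 0` that gives `F(a) = 0`
or `G(b) = 0`: the sum of `φ` over all `D ⊇ E` vanishes for `|E| < i`, hence by
inclusion–exclusion so does the sum over all `D` avoiding a given set of fewer than `i` points, such
as `A ∖ a` (`sum_powerset_eq_zero`).
-/

open Finset

noncomputable section

/-! ### Evaluating `R_q` on functions supported on one level -/

lemma RT_eq {n i : ℕ} {f : Finset (Fin n) → ℂ} (hf : ∀ s, s.card ≠ i → f s = 0) (q : ℕ)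
    (C : Finset (Fin n)) :
    RT n q f C = if C.card = q + i then ∑ D ∈ C.powerset, f D else 0 := by
  unfold RT
  split_ifs with h1 h2 h2
  · refine Finset.sum_subset (fun D hD => ?_) (fun D hD hD' => hf D ?_)
    · exact mem_powerset.2 (mem_powersetCard.1 hD).1
    · intro hc
      exact hD' (mem_powersetCard.2 ⟨mem_powerset.1 hD, by omega⟩)
  · refine Finset.sum_eq_zero fun D hD => hf D ?_
    have := (mem_powersetCard.1 hD).2
    omega
  · omega
  · rfl

lemma card_filter_superset {n : ℕ} {D a : Finset (Fin n)} (hD : D ⊆ a) {p : ℕ}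
    (hp : D.card ≤ p) :
    ((a.powersetCard p).filter (fun P => D ⊆ P)).card =
      (a.card - D.card).choose (p - D.card) := by
  rw [← card_sdiff_of_subset hD, ← card_powersetCard]
  refine Finset.card_nbij' (fun P => P \ D) (fun Q => Q ∪ D) ?_ ?_ ?_ ?_
  · intro P hP
    simp only [coe_filter, mem_powersetCard, Set.mem_ofPred_eq] at hP
    simp only [mem_coe, mem_powersetCard]
    exact ⟨sdiff_subset_sdiff hP.1.1 le_rfl, by rw [card_sdiff_of_subset hP.2, hP.1.2]⟩
  · intro Q hQ
    simp only [mem_coe, mem_powersetCard] at hQ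
    simp only [coe_filter, mem_powersetCard, Set.mem_ofPred_eq]
    refine ⟨⟨union_subset (hQ.1.trans sdiff_subset) hD, ?_⟩, subset_union_right⟩
    rw [card_union_of_disjoint (disjoint_of_subset_left hQ.1 sdiff_disjoint), hQ.2]
    omega
  · intro P hP
    simp only [coe_filter, mem_powersetCard, Set.mem_ofPred_eq] at hP
    exact sdiff_union_of_subset hP.2
  · intro Q hQ
    simp only [mem_coe, mem_powersetCard] at hQ
    exact union_sdiff_cancel_right (disjoint_of_subset_left hQ.1 sdiff_disjoint)

/-- Double counting: each `i`-subset of `a` lies in `C(|a| - i, p - i)` of the `p`-subsets. -/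
lemma sum_powersetCard_sum_powerset {n i : ℕ} {f : Finset (Fin n) → ℂ}
    (hf : ∀ s, s.card ≠ i → f s = 0) (a : Finset (Fin n)) {p : ℕ} (hp : i ≤ p) :
    ∑ P ∈ a.powersetCard p, ∑ D ∈ P.powerset, f D =
      ((a.card - i).choose (p - i) : ℂ) * ∑ D ∈ a.powerset, f D := by
  have h1 : ∀ P ∈ a.powersetCard p, ∑ D ∈ P.powerset, f D =
      ∑ D ∈ a.powerset, if D ⊆ P then f D else 0 := by
    intro P hP
    rw [← Finset.sum_filter]
    refine Finset.sum_congr ?_ fun _ _ => rfl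
    ext D
    simp only [mem_powerset, mem_filter]
    exact ⟨fun h => ⟨h.trans (mem_powersetCard.1 hP).1, h⟩, fun h => h.2⟩
  rw [Finset.sum_congr rfl h1, Finset.sum_comm, Finset.mul_sum]
  refine Finset.sum_congr rfl fun D hD => ?_
  rw [← Finset.sum_filter, Finset.sum_const, nsmul_eq_mul]
  by_cases hc : D.card = i
  · rw [card_filter_superset (mem_powerset.1 hD) (hc ▸ hp), hc]
  · simp [hf D hc]

/-! ### Vanishing caused by `d f = 0` -/

/-- If `d f = 0`, the sum of `f` over all supersets of `E` vanishes for `|E| < i`. With `S(E)` this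
sum, `∑_{x ∉ E} S(E ∪ {x}) = (i - |E|) S(E)`, so the claim follows by induction on `i - |E|`. -/
lemma sum_superset_eq_zero {n i : ℕ} {f : Finset (Fin n) → ℂ}
    (hf : ∀ s, s.card ≠ i → f s = 0) (hd : dR n f = 0) (r : ℕ) :
    ∀ E : Finset (Fin n), E.card + r + 1 = i →
      (∑ D : Finset (Fin n), if E ⊆ D then f D else 0) = 0 := by
  induction r with
  | zero =>
    intro E hE
    -- The supersets of `E` of cardinality `i = |E| + 1` are the sets `insert x E`.
    have hdE : ∑ x ∈ Eᶜ, f (insert x E) = 0 := congrFun hd E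
    rw [← Finset.sum_filter]
    refine Eq.trans (Eq.symm ?_) hdE
    refine Finset.sum_of_injOn (fun x => insert x E) ?_ ?_ ?_ ?_
    · intro x hx y hy hxy
      simp only [coe_compl, Set.mem_compl_iff, mem_coe] at hx hy
      have hmem : x ∈ insert y E := by
        have : insert x E = insert y E := hxy
        rw [← this]; exact mem_insert_self x E
      exact (mem_insert.1 hmem).resolve_right hx
    · intro x _
      simp
    · intro D hD hD'
      refine hf D fun hc => hD' ?_
      have hED : E ⊆ D := (mem_filter.1 hD).2
      have h1 : (D \ E).card = 1 := by rw [card_sdiff_of_subset hED]; omega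
      obtain ⟨x, hx⟩ := card_eq_one.1 h1
      have hxE : x ∉ E := (mem_sdiff.1 (hx ▸ mem_singleton_self x)).2
      refine ⟨x, by simpa using hxE, ?_⟩
      change insert x E = D
      rw [insert_eq, ← hx, sdiff_union_of_subset hED]
    · intro _ _; rfl
  | succ r ih =>
    intro E hE
    have h0 : ∑ x ∈ Eᶜ, (∑ D : Finset (Fin n), if insert x E ⊆ D then f D else 0) = 0 := by
      refine Finset.sum_eq_zero fun x hx => ih _ ?_
      rw [card_insert_of_notMem (by simpa using hx)]
      omega
    rw [Finset.sum_comm] at h0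
    have h1 : ∀ D : Finset (Fin n), (∑ x ∈ Eᶜ, if insert x E ⊆ D then f D else 0) =
        ((r + 2 : ℕ) : ℂ) * if E ⊆ D then f D else 0 := by
      intro D
      by_cases hED : E ⊆ D
      · rw [← Finset.sum_filter, Finset.sum_const, nsmul_eq_mul, if_pos hED]
        by_cases hc : D.card = i
        · have : Eᶜ.filter (fun x => insert x E ⊆ D) = D \ E := by
            ext x
            simp only [mem_filter, mem_compl, mem_sdiff, insert_subset_iff]
            tauto
          rw [this, card_sdiff_of_subset hED]
          congr 2
          omega
        · simp [hf D hc]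
      · rw [if_neg hED, mul_zero]
        exact Finset.sum_eq_zero fun x _ =>
          if_neg fun h => hED ((subset_insert x E).trans h)
    rw [Finset.sum_congr rfl fun D _ => h1 D, ← Finset.mul_sum] at h0
    exact (mul_eq_zero.1 h0).resolve_left (by exact_mod_cast (by omega : r + 2 ≠ 0))

/-- Inclusion–exclusion, one point of `T` at a time: the sum of `f` over the sets containing `E` and
avoiding `T` vanishes if `|E| + |T| < i`. -/
lemma sum_superset_disjoint_eq_zero {n i : ℕ} {f : Finset (Fin n) → ℂ}
    (hf : ∀ s, s.card ≠ i → f s = 0) (hd : dR n f = 0) (T : Finset (Fin n)) :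
    ∀ E : Finset (Fin n), E.card + T.card < i →
      (∑ D : Finset (Fin n), if E ⊆ D ∧ Disjoint D T then f D else 0) = 0 := by
  induction T using Finset.induction_on with
  | empty =>
    intro E hE
    simp only [card_empty, disjoint_empty_right, and_true] at hE ⊢
    exact sum_superset_eq_zero hf hd (i - E.card - 1) E (by omega)
  | insert x T hx ih =>
    intro E hE
    rw [card_insert_of_notMem hx] at hE
    have h1 := ih E (by omega)
    have h2 := ih (insert x E) (by have := card_insert_le x E; omega)
    have h3 : ∀ D : Finset (Fin n),
        (if E ⊆ D ∧ Disjoint D (insert x T) then f D else 0) =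
          (if E ⊆ D ∧ Disjoint D T then f D else 0) -
            (if insert x E ⊆ D ∧ Disjoint D T then f D else 0) := by
      intro D
      simp only [disjoint_insert_right, insert_subset_iff]
      by_cases hxD : x ∈ D <;> simp [hxD]
    rw [Finset.sum_congr rfl fun D _ => h3 D, Finset.sum_sub_distrib, h1, h2, sub_zero]

/-- `R_q f` vanishes at `a ⊆ A` when `|A| - |a| < i`, for `f ∈ ker d` on the `i`-subsets of `A`. -/
lemma sum_powerset_eq_zero {n i : ℕ} {f : Finset (Fin n) → ℂ} {A a : Finset (Fin n)}
    (hf : ∀ s, ¬(s ⊆ A ∧ s.card = i) → f s = 0) (hd : dR n f = 0) (ha : a ⊆ A)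
    (hc : A.card < a.card + i) : ∑ D ∈ a.powerset, f D = 0 := by
  have h := sum_superset_disjoint_eq_zero (fun s hs => hf s fun h => hs h.2) hd (A \ a) ∅
    (by rw [card_sdiff_of_subset ha, card_empty]; have := card_le_card ha; omega)
  rw [← h, ← Finset.sum_filter]
  refine Finset.sum_subset (fun D hD => ?_) (fun D hD hD' => hf D fun hDA => hD' ?_)
  · simp only [mem_filter, mem_univ, empty_subset, true_and]
    exact disjoint_of_subset_left (mem_powerset.1 hD) disjoint_sdiff
  · simp only [mem_filter, mem_univ, empty_subset, true_and] at hD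
    refine mem_powerset.2 fun x hx => by_contra fun hxa => ?_
    exact disjoint_left.1 hD hx (mem_sdiff.2 ⟨hDA.1 hx, hxa⟩)

/-! ### Splitting along the partition into two blocks -/

lemma block_disjoint (n h : ℕ) : Disjoint (block n 0 h) (block n h (n - h)) := by
  rw [disjoint_left]
  intro x h1 h2
  simp only [block, mem_filter] at h1 h2
  omega

lemma block_union (n h : ℕ) : block n 0 h ∪ block n h (n - h) = univ := by
  ext x
  have := x.isLt
  simp only [block, mem_union, mem_filter, mem_univ, true_and, iff_true]
  omega

lemma block_card_le (n o a : ℕ) : (block n o a).card ≤ a := by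
  have h : (block n o a).card ≤ (Finset.Ico o (o + a)).card := by
    refine Finset.card_le_card_of_injOn (fun x => (x : ℕ)) ?_ Fin.val_injective.injOn
    intro x hx
    simpa [block] using hx
  simpa using h

lemma inter_block_union (n h : ℕ) (Z : Finset (Fin n)) :
    (Z ∩ block n 0 h) ∪ (Z ∩ block n h (n - h)) = Z := by
  rw [← inter_union_distrib_left, block_union, inter_univ]

lemma card_inter_block (n h : ℕ) (Z : Finset (Fin n)) :
    (Z ∩ block n 0 h).card + (Z ∩ block n h (n - h)).card = Z.card := by
  rw [← card_union_of_disjoint, inter_block_union]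
  exact disjoint_of_subset_left inter_subset_right
    (disjoint_of_subset_right inter_subset_right (block_disjoint n h))

lemma sum_powerset_split (n h : ℕ) (Z : Finset (Fin n)) (u v : Finset (Fin n) → ℂ) :
    ∑ Y ∈ Z.powerset, tens n h u v Y =
      (∑ P ∈ (Z ∩ block n 0 h).powerset, u P) *
        ∑ Q ∈ (Z ∩ block n h (n - h)).powerset, v Q := by
  rw [Finset.sum_mul_sum, ← Finset.sum_product']
  have hdisj := disjoint_left.1 (block_disjoint n h)
  refine Finset.sum_nbij' (fun Y => (Y ∩ block n 0 h, Y ∩ block n h (n - h)))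
    (fun x => x.1 ∪ x.2) ?_ ?_ ?_ ?_ ?_
  · intro Y hY
    have hY := mem_powerset.1 hY
    simp only [mem_product, mem_powerset]
    exact ⟨inter_subset_inter hY le_rfl, inter_subset_inter hY le_rfl⟩
  · rintro ⟨P, Q⟩ hx
    simp only [mem_product, mem_powerset] at hx
    exact mem_powerset.2
      (union_subset (hx.1.trans inter_subset_left) (hx.2.trans inter_subset_left))
  · intro Y _
    exact inter_block_union n h Y
  · rintro ⟨P, Q⟩ hx
    simp only [mem_product, mem_powerset] at hx
    have hP : P ⊆ block n 0 h := hx.1.trans inter_subset_right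
    have hQ : Q ⊆ block n h (n - h) := hx.2.trans inter_subset_right
    have hPd := disjoint_iff_inter_eq_empty.1 (disjoint_of_subset_left hP (block_disjoint n h))
    have hQd := disjoint_iff_inter_eq_empty.1
      (disjoint_of_subset_left hQ (block_disjoint n h).symm)
    simp only [union_inter_distrib_right, hPd, hQd, inter_eq_left.2 hP, inter_eq_left.2 hQ,
      union_empty, empty_union]
  · intro Y _
    rfl

/-- Only the subsets of `a` of cardinality `p = q + i` contribute to the sum of `R_q f`. -/
lemma sum_powerset_RT {n i : ℕ} {f : Finset (Fin n) → ℂ} (hf : ∀ s, s.card ≠ i → f s = 0)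
    (a : Finset (Fin n)) {q p : ℕ} (hp : q + i = p) :
    ∑ P ∈ a.powerset, RT n q f P = ((a.card - i).choose q : ℂ) * ∑ D ∈ a.powerset, f D := by
  have hq : q = p - i := by omega
  rw [Finset.sum_congr rfl fun P _ => RT_eq hf q P, ← Finset.sum_filter, hp,
    ← powersetCard_eq_filter, sum_powersetCard_sum_powerset hf a (by omega), hq]


/-- Lemma 2.5: `R_{m-k}[(R_{k-l-i}φ) ⊗ (R_{l-j}ψ)]
  = ∑_w C(m-w-i, k-l-i) C(w-j, l-j) (R_{m-w-i}φ) ⊗ (R_{w-j}ψ)`. -/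
theorem stmt7 (n h i j k m l : ℕ) (hn : 1 ≤ n) (hh : h ≤ n) (hi : 2 * i ≤ h)
    (hj : 2 * j ≤ n - h)
    (φ ψ : Finset (Fin n) → ℂ)
    (hφsupp : ∀ s : Finset (Fin n), ¬(s ⊆ block n 0 h ∧ s.card = i) → φ s = 0)
    (hφd : dR n φ = 0)
    (hψsupp : ∀ s : Finset (Fin n), ¬(s ⊆ block n h (n - h) ∧ s.card = j) → ψ s = 0)
    (hψd : dR n ψ = 0)
    (hk : k ≤ m) (hm : m ≤ n)
    (hl1 : (i : ℤ) - h + k ≤ l) (hl2 : j ≤ l) (hl3 : (l : ℤ) ≤ (k : ℤ) - i)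
    (hl4 : (l : ℤ) ≤ (n : ℤ) - h - j)
    (Z : Finset (Fin n)) (hZ : Z.card = m) :
    RT n (m - k) (tens n h (RT n (k - l - i) φ) (RT n (l - j) ψ)) Z =
      ∑ w ∈ Finset.Icc (max l (i + m - h)) (min (m - k + l) (n - h - j)),
        ((m - w - i).choose (k - l - i) : ℂ) * ((w - j).choose (l - j) : ℂ) *
          tens n h (RT n (m - w - i) φ) (RT n (w - j) ψ) Z := by
  have hφ : ∀ s : Finset (Fin n), s.card ≠ i → φ s = 0 := fun s hs => hφsupp s fun h => hs h.2
  have hψ : ∀ s : Finset (Fin n), s.card ≠ j → ψ s = 0 := fun s hs => hψsupp s fun h => hs h.2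
  have hcard := card_inter_block n h Z
  have hL : RT n (m - k) (tens n h (RT n (k - l - i) φ) (RT n (l - j) ψ)) Z =
      (((Z ∩ block n 0 h).card - i).choose (k - l - i) *
        ∑ D ∈ (Z ∩ block n 0 h).powerset, φ D) *
      (((Z ∩ block n h (n - h)).card - j).choose (l - j) *
        ∑ D ∈ (Z ∩ block n h (n - h)).powerset, ψ D) := by
    -- The tensor factor lives on `k`-subsets, so `R_{m-k}` sums it over all subsets of `Z`.
    rw [RT_eq (i := k), if_pos (by omega), sum_powerset_split,
      sum_powerset_RT hφ _ (p := k - l) (by omega), sum_powerset_RT hψ _ (p := l) (by omega)]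
    intro s hs
    have hs' := card_inter_block n h s
    unfold tens
    rw [RT_eq hφ, RT_eq hψ]
    split_ifs with h1 h2
    · omega
    all_goals simp
  have hR : ∀ w ∈ Finset.Icc (max l (i + m - h)) (min (m - k + l) (n - h - j)),
      ((m - w - i).choose (k - l - i) : ℂ) * ((w - j).choose (l - j) : ℂ) *
          tens n h (RT n (m - w - i) φ) (RT n (w - j) ψ) Z =
        if w = (Z ∩ block n h (n - h)).card then
          (((Z ∩ block n 0 h).card - i).choose (k - l - i) *
            ∑ D ∈ (Z ∩ block n 0 h).powerset, φ D) *
          (((Z ∩ block n h (n - h)).card - j).choose (l - j) *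
            ∑ D ∈ (Z ∩ block n h (n - h)).powerset, ψ D) else 0 := by
    intro w hw
    rw [Finset.mem_Icc] at hw
    unfold tens
    rw [RT_eq hφ, RT_eq hψ]
    by_cases hwb : w = (Z ∩ block n h (n - h)).card
    · rw [if_pos hwb, if_pos (by omega), if_pos (by omega), ← hwb,
        show (Z ∩ block n 0 h).card = m - w by omega]
      ring
    · rw [if_neg hwb, if_neg (c := (Z ∩ block n h (n - h)).card = w - j + j) (by omega)]
      simp
  rw [hL, Finset.sum_congr rfl hR, Finset.sum_ite_eq']
  split_ifs with hmem
  · rfl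
  rw [Finset.mem_Icc] at hmem
  have hA := block_card_le n 0 h
  have hB := block_card_le n h (n - h)
  by_cases h1 : h < (Z ∩ block n 0 h).card + i
  · rw [sum_powerset_eq_zero hφsupp hφd inter_subset_right (by omega)]
    simp
  by_cases h2 : n - h < (Z ∩ block n h (n - h)).card + j
  · rw [sum_powerset_eq_zero hψsupp hψd inter_subset_right (by omega)]
    simp
  by_cases h3 : (Z ∩ block n h (n - h)).card < l
  · by_cases h4 : (Z ∩ block n h (n - h)).card < j
    · -- Here `|b| - j` truncates to `0`, but `b` has no subset of cardinality `j` at all.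
      rw [Finset.sum_eq_zero (s := (Z ∩ block n h (n - h)).powerset) fun D hD => hψ D ?_]
      · simp
      · have := card_le_card (mem_powerset.1 hD)
        omega
    · rw [Nat.choose_eq_zero_of_lt (n := (Z ∩ block n h (n - h)).card - j) (by omega)]
      simp
  by_cases h4 : (Z ∩ block n 0 h).card < i
  · rw [Finset.sum_eq_zero (s := (Z ∩ block n 0 h).powerset) fun D hD => hφ D ?_]
    · simp
    · have := card_le_card (mem_powerset.1 hD)
      omega
  · rw [Nat.choose_eq_zero_of_lt (n := (Z ∩ block n 0 h).card - i) (by omega)]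
    simp
end
end
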